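/- There is a first-order formula φ_r(x,y) over the language with binary relation symbols for < and ◁ and unary relation symbols for C and Q such that for every n ∈ ℕ and all a,b ∈ {0,...,n}, the finite prefix structure ({0,...,n}, <, ◁, C, Q) satisfies φ_r(a,b) iff r(a) = b. -/

import Mathlib

open FirstOrder Language

/-- `q_i = i(i+1)/2`, the smallest element of column `i`. -/
def qseq (i : ℕ) : ℕ := i * (i + 1) / 2

/-- `c(x)`, the column number of `x`: the largest `i` with `q_i ≤ x`. -/
def col (x : ℕ) : ℕ := Nat.findGreatest (fun i => qseq i ≤ x) x

/-- `q(x) = q_{c(x)}`, the bottom-most element of the column of `x`. -/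
def qf (x : ℕ) : ℕ := qseq (col x)

/-- `r(x) = x - q(x)`, the row number of `x`. -/
def rowf (x : ℕ) : ℕ := x - qf x

/-- The row-major linear order `◁`. -/
def ordc (x y : ℕ) : Prop := rowf x < rowf y ∨ (rowf x = rowf y ∧ col x < col y)

/-- The unary predicate `C`: bit `r(x)` of `c(x)+1` is 1. -/
def Cpred (x : ℕ) : Prop := Nat.testBit (col x + 1) (rowf x) = true

/-- The unary predicate `Q`: bit `r(x)` of `q_{c(x)+1}` is 1. -/
def Qpred (x : ℕ) : Prop := Nat.testBit (qseq (col x + 1)) (rowf x) = true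

/-- Relation symbols of the language with binary `<`, `◁` and unary `C`, `Q`. -/
inductive Rel4 : ℕ → Type
  | lt : Rel4 2
  | ordc : Rel4 2
  | C : Rel4 1
  | Q : Rel4 1

/-- The language with binary relation symbols for `<` and `◁` and unary `C`, `Q`. -/
def L4 : Language := ⟨fun _ => Empty, Rel4⟩

/-- The finite prefix structure `({0,...,n}, <, ◁, C, Q)`. -/
def struct4 (n : ℕ) : L4.Structure (Fin (n + 1)) where
  funMap := fun f _ => f.elim
  RelMap := fun r v =>
    match r with
    | .lt => (v 0 : ℕ) < (v 1 : ℕ)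
    | .ordc => ordc (v 0 : ℕ) (v 1 : ℕ)
    | .C => Cpred (v 0 : ℕ)
    | .Q => Qpred (v 0 : ℕ)

/-
The number `y` is the sum `q(y) + r(y)`. The binary digits of `r(x)` are read off `C` in the column
numbered `r(x) - 1`, those of `q(y)` off `Q` in the column before that of `y`, and the digits of the
sum are first-order definable from these by carry lookahead. Comparing them with the digits of
`r(x)` decides `r(x) = y`. The elements of a single column index the digits, and comparing rows of
different columns reduces to `◁`; columns are recognised from their bottom elements, the points at
which the `◁`-increasing runs of successors break off.
-/

/-! ### Columns and rows -/

lemma qseq_succ (i : ℕ) : qseq (i + 1) = qseq i + (i + 1) := by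
  simpa [qseq, mul_comm] using Nat.triangle_succ (i + 1)

lemma qseq_monotone : Monotone qseq :=
  monotone_nat_of_le_succ fun i => by rw [qseq_succ]; omega

lemma qseq_add_lt_qseq {i j : ℕ} (h : i < j) : qseq i + i < qseq j := by
  have := qseq_monotone (Nat.succ_le_of_lt h)
  rw [Nat.succ_eq_add_one, qseq_succ] at this
  omega

lemma le_qseq (i : ℕ) : i ≤ qseq i := by
  cases i with
  | zero => exact Nat.zero_le _
  | succ i => rw [qseq_succ]; omega

lemma qseq_lt_two_pow (i : ℕ) : qseq i < 2 ^ i := by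
  induction i with
  | zero => decide
  | succ i ih =>
    have : i + 1 ≤ 2 ^ i := Nat.lt_two_pow_self
    rw [qseq_succ, pow_succ]
    omega

lemma col_le_self (x : ℕ) : col x ≤ x :=
  Nat.findGreatest_le x

lemma qseq_col_add_rowf (x : ℕ) : qseq (col x) + rowf x = x :=
  Nat.add_sub_cancel' <|
    Nat.findGreatest_spec (P := fun i => qseq i ≤ x) (Nat.zero_le x) (Nat.zero_le x)

lemma rowf_le_col (x : ℕ) : rowf x ≤ col x := by
  by_contra! h
  have hx := qseq_col_add_rowf x
  have hq : qseq (col x + 1) ≤ x := by rw [qseq_succ]; omega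
  have : col x + 1 ≤ col x := Nat.le_findGreatest ((le_qseq _).trans hq) hq
  omega

lemma col_qseq_add {c r : ℕ} (h : r ≤ c) : col (qseq c + r) = c := by
  have hx := qseq_col_add_rowf (qseq c + r)
  have hr := rowf_le_col (qseq c + r)
  rcases lt_trichotomy (col (qseq c + r)) c with hc | hc | hc
  · have := qseq_add_lt_qseq hc; omega
  · exact hc
  · have := qseq_add_lt_qseq hc; omega

lemma rowf_qseq_add {c r : ℕ} (h : r ≤ c) : rowf (qseq c + r) = r := by
  simp [rowf, qf, col_qseq_add h]

lemma lt_of_col_lt {x y : ℕ} (h : col x < col y) : x < y := by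
  have hx := qseq_col_add_rowf x
  have hy := qseq_col_add_rowf y
  have := rowf_le_col x
  have := qseq_add_lt_qseq h
  omega

lemma lt_two_pow_of_col_le {y m : ℕ} (h : col y ≤ m) : y < 2 ^ (m + 1) :=
  calc
    y = qseq (col y) + rowf y := (qseq_col_add_rowf y).symm
    _ ≤ qseq (col y) + col y := Nat.add_le_add_left (rowf_le_col y) _
    _ < qseq (m + 1) := qseq_add_lt_qseq (Nat.lt_succ_of_le h)
    _ < 2 ^ (m + 1) := qseq_lt_two_pow _

lemma col_monotone : Monotone col := fun _ _ h =>
  not_lt.1 fun hc => (lt_of_col_lt hc).not_ge h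

lemma lt_iff_rowf_lt_of_col_eq {x y : ℕ} (h : col x = col y) : x < y ↔ rowf x < rowf y := by
  have hx := qseq_col_add_rowf x
  have hy := qseq_col_add_rowf y
  rw [h] at hx
  omega

-- The point `1` is the only bottom element that comes `◁`-after its predecessor.
lemma rowf_add_one_eq_zero_iff (x : ℕ) : rowf (x + 1) = 0 ↔ (ordc x (x + 1) → x = 0) := by
  have hx := qseq_col_add_rowf x
  have hy := qseq_col_add_rowf (x + 1)
  have hrow := rowf_le_col x
  rcases (col_monotone (Nat.le_add_right x 1)).eq_or_lt with hc | hc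
  · rw [← hc] at hy
    have hx0 : x ≠ 0 := by
      have := rowf_le_col (x + 1)
      have := col_le_self x
      omega
    have : ordc x (x + 1) := Or.inl (by omega)
    exact iff_of_false (by omega) fun h => hx0 (h this)
  · have := qseq_add_lt_qseq hc
    refine iff_of_true (by omega) fun h => ?_
    have hx0 : col x = 0 := by unfold ordc at h; omega
    rw [hx0] at hrow
    rw [hx0, Nat.le_zero.1 hrow] at hx
    exact hx.symm

/-! ### Witnesses and characterisations inside a prefix -/

section Prefix

variable {n : ℕ}

lemma exists_col_eq_of_lt_col {x : Fin (n + 1)} {c r : ℕ} (hr : r ≤ c) (hc : c < col x) :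
    ∃ z : Fin (n + 1), col z = c ∧ rowf z = r := by
  have : qseq c + r < x := lt_of_col_lt (by rwa [col_qseq_add hr])
  exact ⟨⟨qseq c + r, by omega⟩, col_qseq_add hr, rowf_qseq_add hr⟩

lemma exists_col_eq_of_le_rowf {x : Fin (n + 1)} {r : ℕ} (hr : r ≤ rowf x) :
    ∃ z : Fin (n + 1), col z = col x ∧ rowf z = r := by
  have hx := qseq_col_add_rowf x
  have hrc := hr.trans (rowf_le_col x)
  exact ⟨⟨qseq (col x) + r, by omega⟩, col_qseq_add hrc, rowf_qseq_add hrc⟩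

lemma exists_col_add_one_eq {x : Fin (n + 1)} {m r : ℕ} (hm : m ≤ col x) (hr : r < m) :
    ∃ z : Fin (n + 1), col z + 1 = m ∧ rowf z = r := by
  obtain ⟨z, hz, hzr⟩ := exists_col_eq_of_lt_col (c := m - 1) (Nat.le_sub_one_of_lt hr)
    (by omega : m - 1 < col x)
  exact ⟨z, by omega, hzr⟩

lemma exists_lt_rowf_iff {p : ℕ → Prop} (x : Fin (n + 1)) :
    (∃ k < rowf x, p k) ↔ ∃ z : Fin (n + 1), rowf z < rowf x ∧ p (rowf z) := by
  constructor
  · rintro ⟨k, hk, hp⟩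
    obtain ⟨z, -, rfl⟩ := exists_col_eq_of_le_rowf hk.le
    exact ⟨z, hk, hp⟩
  · rintro ⟨z, hz, hp⟩
    exact ⟨rowf z, hz, hp⟩

lemma forall_lt_rowf_iff {p : ℕ → Prop} (x : Fin (n + 1)) :
    (∀ k < rowf x, p k) ↔ ∀ z : Fin (n + 1), rowf z < rowf x → p (rowf z) := by
  simpa using (exists_lt_rowf_iff (p := fun k => ¬ p k) x).not

lemma add_one_eq_iff_forall (x y : Fin (n + 1)) :
    (x : ℕ) + 1 = y ↔ (x : ℕ) < y ∧ ∀ z : Fin (n + 1), (x : ℕ) < z → ¬ (z : ℕ) < y :=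
  Order.covBy_iff_add_one_eq.symm.trans Fin.covBy_iff.symm

lemma eq_zero_iff_forall_not_lt (x : Fin (n + 1)) :
    (x : ℕ) = 0 ↔ ∀ z : Fin (n + 1), ¬ (z : ℕ) < x :=
  ⟨fun h z => by omega, fun h => by simpa using h 0⟩

lemma rowf_eq_zero_iff_forall (x : Fin (n + 1)) :
    rowf x = 0 ↔ ∀ z : Fin (n + 1), (z : ℕ) + 1 = x → ordc z x → (z : ℕ) = 0 := by
  constructor
  · intro h z hz
    rw [← hz] at h ⊢
    exact (rowf_add_one_eq_zero_iff z).1 h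
  · intro h
    obtain ⟨_ | x, hx⟩ := x
    · simp [rowf]
    · exact (rowf_add_one_eq_zero_iff x).2 (h ⟨x, by omega⟩ rfl)

lemma col_le_col_iff_forall (x y : Fin (n + 1)) :
    col x ≤ col y ↔ ∀ z : Fin (n + 1), rowf z = 0 → (y : ℕ) < z → (x : ℕ) < z := by
  constructor
  · intro h z hz hyz
    have hc : col y < col z := (col_monotone hyz.le).lt_of_ne fun he => by
      have := (lt_iff_rowf_lt_of_col_eq he).1 hyz
      omega
    exact lt_of_col_lt (h.trans_lt hc)
  · intro h
    by_contra! hc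
    obtain ⟨z, hzc, hzr⟩ := exists_col_eq_of_le_rowf (Nat.zero_le (rowf x))
    have hxz := h z hzr (lt_of_col_lt (by omega))
    have := (lt_iff_rowf_lt_of_col_eq hzc.symm).1 hxz
    omega

lemma rowf_lt_rowf_iff_ordc (x y : Fin (n + 1)) :
    rowf x < rowf y ↔ ordc x y ∧ (col x < col y →
      ∃ z : Fin (n + 1), (z : ℕ) < y ∧ col z = col y ∧ ordc x z) := by
  constructor
  · refine fun h => ⟨Or.inl h, fun hc => ?_⟩
    obtain ⟨z, hzc, hzr⟩ := exists_col_eq_of_le_rowf h.le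
    exact ⟨z, (lt_iff_rowf_lt_of_col_eq hzc).2 (by omega), hzc, Or.inr ⟨hzr.symm, by omega⟩⟩
  · rintro ⟨h | ⟨-, hc⟩, hz⟩
    · exact h
    · obtain ⟨z, hzy, hzc, h | h⟩ := hz hc <;>
      · have := (lt_iff_rowf_lt_of_col_eq hzc).1 hzy
        omega

-- A column to the left of that of `x` lies entirely in the prefix, so its rows reach its number.
lemma col_lt_rowf_iff_forall (z x : Fin (n + 1)) :
    col z < rowf x ↔ col z < col x ∧ ∀ w : Fin (n + 1), col w = col z → rowf w < rowf x := by
  constructor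
  · intro h
    exact ⟨h.trans_le (rowf_le_col x), fun w hw => (rowf_le_col w).trans_lt (hw ▸ h)⟩
  · rintro ⟨hc, h⟩
    obtain ⟨w, hwc, hwr⟩ := exists_col_eq_of_lt_col le_rfl hc
    exact hwr ▸ h w hwc

lemma col_le_iff_forall (z : Fin (n + 1)) (m : ℕ) :
    col z ≤ m ↔ ∀ w : Fin (n + 1), col w < col z → col w < m := by
  refine ⟨fun h w hw => hw.trans_le h, fun h => ?_⟩
  by_contra! hm
  obtain ⟨w, rfl, -⟩ := exists_col_eq_of_lt_col (Nat.zero_le m) hm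
  exact (h w hm).false

lemma col_add_one_eq_iff_forall {x : Fin (n + 1)} {m : ℕ} (hm : m ≤ col x) (z : Fin (n + 1)) :
    col z + 1 = m ↔ col z < m ∧ ∀ w : Fin (n + 1), col w < m → col w ≤ col z := by
  constructor
  · rintro rfl
    exact ⟨Nat.lt_succ_self _, fun w => Nat.le_of_lt_succ⟩
  · rintro ⟨hz, h⟩
    obtain ⟨w, hw, -⟩ := exists_col_add_one_eq hm (Nat.zero_lt_of_lt hz)
    have := h w (by omega)
    omega

lemma testBit_iff_exists_col_add_one_eq {x : Fin (n + 1)} {m a i : ℕ} (hm : m ≤ col x)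
    (ha : a < 2 ^ m) :
    a.testBit i ↔ ∃ z : Fin (n + 1), col z + 1 = m ∧ rowf z = i ∧ a.testBit (rowf z) := by
  constructor
  · intro h
    have hi : i < m :=
      (Nat.pow_lt_pow_iff_right one_lt_two).1 ((Nat.ge_two_pow_of_testBit h).trans_lt ha)
    obtain ⟨z, hz, rfl⟩ := exists_col_add_one_eq hm hi
    exact ⟨z, hz, rfl, h⟩
  · rintro ⟨z, -, rfl, h⟩
    exact h

lemma testBit_rowf_iff_exists_Cpred (x i : Fin (n + 1)) :
    (rowf x).testBit (rowf i) ↔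
      ∃ z : Fin (n + 1), col z + 1 = rowf x ∧ rowf z = rowf i ∧ Cpred z :=
  (testBit_iff_exists_col_add_one_eq (rowf_le_col x) Nat.lt_two_pow_self).trans <|
    exists_congr fun _ => and_congr_right fun hz => by rw [Cpred, hz]

lemma testBit_qseq_col_iff_exists_Qpred (x i : Fin (n + 1)) :
    (qseq (col x)).testBit (rowf i) ↔
      ∃ z : Fin (n + 1), col z + 1 = col x ∧ rowf z = rowf i ∧ Qpred z :=
  (testBit_iff_exists_col_add_one_eq le_rfl (qseq_lt_two_pow _)).trans <|
    exists_congr fun _ => and_congr_right fun hz => by rw [Qpred, hz]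

-- `col y ≤ rowf x` bounds `y` by `2 ^ (rowf x + 1)`, and the column of `x` contains all rows up to
-- `rowf x`, hence an index for every binary digit that can occur.
lemma rowf_eq_iff_forall_testBit (x y : Fin (n + 1)) :
    rowf x = y ↔ col y ≤ rowf x ∧
      ∀ i : Fin (n + 1), (rowf x).testBit (rowf i) ↔ (y : ℕ).testBit (rowf i) := by
  constructor
  · intro h
    exact ⟨h ▸ col_le_self y, fun i => by rw [h]⟩
  · rintro ⟨hc, h⟩
    refine Nat.eq_of_testBit_eq fun k => ?_
    rcases le_or_gt k (rowf x) with hk | hk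
    · obtain ⟨i, -, rfl⟩ := exists_col_eq_of_le_rowf hk
      exact Bool.eq_iff_iff.2 (h i)
    · have hpow : 2 ^ (rowf x + 1) ≤ 2 ^ k := Nat.pow_le_pow_right two_pos hk
      rw [Nat.testBit_lt_two_pow ((lt_two_pow_of_col_le hc).trans_le hpow),
        Nat.testBit_lt_two_pow ((lt_two_pow_of_col_le (col_le_self _)).trans_le hpow)]

end Prefix

/-! ### Carry lookahead -/

/-- The sum of the binary numbers `a` and `b` has a carry into position `i`; the counterpart for
natural numbers of `BitVec.carry`. -/
def CarryInto (a b i : ℕ) : Prop :=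
  2 ^ i ≤ a % 2 ^ i + b % 2 ^ i

lemma testBit_add_iff_carryInto (a b i : ℕ) :
    (a + b).testBit i ↔ ((a.testBit i ↔ b.testBit i) ↔ CarryInto a b i) := by
  have h := BitVec.getLsbD_add i.lt_succ_self (BitVec.ofNat (i + 1) a) (BitVec.ofNat (i + 1) b)
  have hdvd : 2 ^ i ∣ 2 ^ (i + 1) := pow_dvd_pow 2 i.le_succ
  simp only [← BitVec.ofNat_add, BitVec.getLsbD_ofNat, Nat.lt_succ_self, decide_true,
    Bool.true_and, BitVec.carry, BitVec.toNat_ofNat, Nat.mod_mod_of_dvd _ hdvd] at h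
  rw [h, CarryInto]
  cases a.testBit i <;> cases b.testBit i <;> simp

lemma carryInto_succ_iff (a b i : ℕ) : CarryInto a b (i + 1) ↔
    (a.testBit i ∧ b.testBit i) ∨ ((a.testBit i ∨ b.testBit i) ∧ CarryInto a b i) := by
  have ha := Nat.mod_lt a (Nat.two_pow_pos i)
  have hb := Nat.mod_lt b (Nat.two_pow_pos i)
  rw [CarryInto, Nat.mod_pow_succ, Nat.mod_pow_succ (x := b), ← Nat.toNat_testBit,
    ← Nat.toNat_testBit, pow_succ, CarryInto]
  cases a.testBit i <;> cases b.testBit i <;> simp <;> omega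

lemma carryInto_iff_exists (a b i : ℕ) : CarryInto a b i ↔
    ∃ j < i, (a.testBit j ∧ b.testBit j) ∧ ∀ k < i, j < k → a.testBit k ∨ b.testBit k := by
  induction i with
  | zero => simp [CarryInto, Nat.mod_one]
  | succ i ih =>
    rw [carryInto_succ_iff, ih]
    constructor
    · rintro (hgen | ⟨hprop, j, hj, hgen, hk⟩)
      · exact ⟨i, i.lt_succ_self, hgen, fun k _ _ => by omega⟩
      · refine ⟨j, hj.trans i.lt_succ_self, hgen, fun k hki hjk => ?_⟩
        rcases Nat.lt_succ_iff_lt_or_eq.1 hki with hki | rfl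
        exacts [hk k hki hjk, hprop]
    · rintro ⟨j, hj, hgen, hk⟩
      rcases Nat.lt_succ_iff_lt_or_eq.1 hj with hj | rfl
      · exact Or.inr ⟨hk i i.lt_succ_self hj, j, hj, hgen,
          fun k hki => hk k (hki.trans i.lt_succ_self)⟩
      · exact Or.inl hgen

lemma carryInto_rowf_iff_exists {n : ℕ} (a b : ℕ) (i : Fin (n + 1)) : CarryInto a b (rowf i) ↔
    ∃ j : Fin (n + 1), rowf j < rowf i ∧ (a.testBit (rowf j) ∧ b.testBit (rowf j)) ∧
      ∀ k : Fin (n + 1), rowf k < rowf i → rowf j < rowf k →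
        a.testBit (rowf k) ∨ b.testBit (rowf k) := by
  rw [carryInto_iff_exists, exists_lt_rowf_iff]
  simp only [forall_lt_rowf_iff]

/-! ### Uniform definability -/

/-- The predicates `P i` on assignments of the variables `α` in the structures `M i` are defined by
one formula that does not depend on `i`. -/
def UniformlyDefinable (L : Language) {ι : Type*} (M : ι → Type*) [∀ i, L.Structure (M i)]
    {α : Type*} (P : ∀ i, (α → M i) → Prop) : Prop :=
  ∃ φ : L.Formula α, ∀ i (v : α → M i), φ.Realize v ↔ P i v

namespace UniformlyDefinable

variable {L : Language} {ι : Type*} {M : ι → Type*} [∀ i, L.Structure (M i)] {α β : Type*}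
  {P P' : ∀ i, (α → M i) → Prop}

lemma of_relMap {k : ℕ} (R : L.Relations k) :
    UniformlyDefinable L M fun _ (v : Fin k → M _) => Structure.RelMap R v :=
  ⟨R.formula Term.var, fun _ _ => Formula.realize_rel⟩

lemma of_iff (h : ∀ i v, P i v ↔ P' i v) (hP' : UniformlyDefinable L M P') :
    UniformlyDefinable L M P :=
  hP'.imp fun _ hφ i v => (hφ i v).trans (h i v).symm

lemma relabel (hP : UniformlyDefinable L M P) (f : α → β) :
    UniformlyDefinable L M fun i v => P i (v ∘ f) := by
  obtain ⟨φ, hφ⟩ := hP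
  exact ⟨φ.relabel f, fun i v => Formula.realize_relabel.trans (hφ i _)⟩

lemma not (hP : UniformlyDefinable L M P) : UniformlyDefinable L M fun i v => ¬ P i v := by
  obtain ⟨φ, hφ⟩ := hP
  exact ⟨φ.not, fun i v => Formula.realize_not.trans (hφ i v).not⟩

lemma and (hP : UniformlyDefinable L M P) (hP' : UniformlyDefinable L M P') :
    UniformlyDefinable L M fun i v => P i v ∧ P' i v := by
  obtain ⟨φ, hφ⟩ := hP
  obtain ⟨ψ, hψ⟩ := hP'
  exact ⟨φ ⊓ ψ, fun i v => Formula.realize_inf.trans (and_congr (hφ i v) (hψ i v))⟩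

lemma or (hP : UniformlyDefinable L M P) (hP' : UniformlyDefinable L M P') :
    UniformlyDefinable L M fun i v => P i v ∨ P' i v := by
  obtain ⟨φ, hφ⟩ := hP
  obtain ⟨ψ, hψ⟩ := hP'
  exact ⟨φ ⊔ ψ, fun i v => Formula.realize_sup.trans (or_congr (hφ i v) (hψ i v))⟩

lemma imp (hP : UniformlyDefinable L M P) (hP' : UniformlyDefinable L M P') :
    UniformlyDefinable L M fun i v => P i v → P' i v := by
  obtain ⟨φ, hφ⟩ := hP
  obtain ⟨ψ, hψ⟩ := hP'
  exact ⟨φ.imp ψ, fun i v => Formula.realize_imp.trans (imp_congr (hφ i v) (hψ i v))⟩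

lemma iff (hP : UniformlyDefinable L M P) (hP' : UniformlyDefinable L M P') :
    UniformlyDefinable L M fun i v => P i v ↔ P' i v := by
  obtain ⟨φ, hφ⟩ := hP
  obtain ⟨ψ, hψ⟩ := hP'
  exact ⟨φ.iff ψ, fun i v => Formula.realize_iff.trans (iff_congr (hφ i v) (hψ i v))⟩

lemma ex {P : ∀ i, (α → M i) → M i → Prop}
    (hP : UniformlyDefinable L M fun i (v : α ⊕ Unit → M i) => P i (v ∘ Sum.inl) (v (Sum.inr ()))) :
    UniformlyDefinable L M fun i v => ∃ a, P i v a := by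
  obtain ⟨φ, hφ⟩ := hP
  refine ⟨φ.iExs Unit, fun i v => Formula.realize_iExs.trans ?_⟩
  exact ((Equiv.funUnique Unit (M i)).exists_congr fun w => hφ i (Sum.elim v w))

lemma all {P : ∀ i, (α → M i) → M i → Prop}
    (hP : UniformlyDefinable L M fun i (v : α ⊕ Unit → M i) => P i (v ∘ Sum.inl) (v (Sum.inr ()))) :
    UniformlyDefinable L M fun i v => ∀ a, P i v a :=
  of_iff (fun _ _ => not_exists_not.symm) (ex (P := fun i v a => ¬ P i v a) hP.not).not

end UniformlyDefinable

/-! ### Definability in the prefix structures -/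

/-- The universe `{0,...,n}` of the `n`-th prefix structure, under a name of its own so that
`Prefix` can be used as a family of structures. -/
abbrev Prefix (n : ℕ) : Type := Fin (n + 1)

instance (n : ℕ) : L4.Structure (Prefix n) := struct4 n

/-- One formula in `<`, `◁`, `C`, `Q` defines the unary predicate `R` in every prefix structure. -/
def PrefixDefinable₁ (R : ℕ → Prop) : Prop :=
  UniformlyDefinable L4 Prefix fun _ (v : Fin 1 → Prefix _) => R (v 0)

/-- One formula in `<`, `◁`, `C`, `Q` defines the binary relation `R` in every prefix structure. -/
def PrefixDefinable₂ (R : ℕ → ℕ → Prop) : Prop :=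
  UniformlyDefinable L4 Prefix fun _ (v : Fin 2 → Prefix _) => R (v 0) (v 1)

lemma PrefixDefinable₁.app {α : Type*} {R : ℕ → Prop} (h : PrefixDefinable₁ R) (i : α) :
    UniformlyDefinable L4 Prefix fun _ (v : α → Prefix _) => R (v i) :=
  h.relabel ![i]

lemma PrefixDefinable₂.app {α : Type*} {R : ℕ → ℕ → Prop} (h : PrefixDefinable₂ R) (i j : α) :
    UniformlyDefinable L4 Prefix fun _ (v : α → Prefix _) => R (v i) (v j) :=
  h.relabel ![i, j]

lemma prefixDefinable_lt : PrefixDefinable₂ fun x y => x < y :=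
  UniformlyDefinable.of_relMap (L := L4) Rel4.lt

lemma prefixDefinable_ordc : PrefixDefinable₂ ordc :=
  UniformlyDefinable.of_relMap (L := L4) Rel4.ordc

lemma prefixDefinable_Cpred : PrefixDefinable₁ Cpred :=
  UniformlyDefinable.of_relMap (L := L4) Rel4.C

lemma prefixDefinable_Qpred : PrefixDefinable₁ Qpred :=
  UniformlyDefinable.of_relMap (L := L4) Rel4.Q

lemma prefixDefinable_add_one_eq : PrefixDefinable₂ fun x y => x + 1 = y :=
  .of_iff (fun _ v => add_one_eq_iff_forall (v 0) (v 1)) <|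
    (prefixDefinable_lt.app _ _).and <| .all <|
      (prefixDefinable_lt.app _ _).imp (prefixDefinable_lt.app _ _).not

lemma prefixDefinable_eq_zero : PrefixDefinable₁ fun x => x = 0 :=
  .of_iff (fun _ v => eq_zero_iff_forall_not_lt (v 0)) <| .all (prefixDefinable_lt.app _ _).not

lemma prefixDefinable_rowf_eq_zero : PrefixDefinable₁ fun x => rowf x = 0 :=
  .of_iff (fun _ v => rowf_eq_zero_iff_forall (v 0)) <| .all <|
    (prefixDefinable_add_one_eq.app _ _).imp <|
      (prefixDefinable_ordc.app _ _).imp (prefixDefinable_eq_zero.app _)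

lemma prefixDefinable_col_le_col : PrefixDefinable₂ fun x y => col x ≤ col y :=
  .of_iff (fun _ v => col_le_col_iff_forall (v 0) (v 1)) <| .all <|
    (prefixDefinable_rowf_eq_zero.app _).imp <|
      (prefixDefinable_lt.app _ _).imp (prefixDefinable_lt.app _ _)

lemma prefixDefinable_col_lt_col : PrefixDefinable₂ fun x y => col x < col y :=
  .of_iff (fun _ _ => not_le.symm) (prefixDefinable_col_le_col.app 1 0).not

lemma prefixDefinable_col_eq_col : PrefixDefinable₂ fun x y => col x = col y :=
  .of_iff (fun _ _ => le_antisymm_iff) <|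
    (prefixDefinable_col_le_col.app 0 1).and (prefixDefinable_col_le_col.app 1 0)

lemma prefixDefinable_rowf_lt_rowf : PrefixDefinable₂ fun x y => rowf x < rowf y :=
  .of_iff (fun _ v => rowf_lt_rowf_iff_ordc (v 0) (v 1)) <|
    (prefixDefinable_ordc.app _ _).and <| (prefixDefinable_col_lt_col.app _ _).imp <| .ex <|
      (prefixDefinable_lt.app _ _).and <|
        (prefixDefinable_col_eq_col.app _ _).and (prefixDefinable_ordc.app _ _)

lemma prefixDefinable_rowf_eq_rowf : PrefixDefinable₂ fun x y => rowf x = rowf y :=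
  .of_iff (fun _ _ => le_antisymm_iff.trans (and_congr not_lt.symm not_lt.symm)) <|
    (prefixDefinable_rowf_lt_rowf.app 1 0).not.and (prefixDefinable_rowf_lt_rowf.app 0 1).not

lemma prefixDefinable_col_lt_rowf : PrefixDefinable₂ fun x y => col x < rowf y :=
  .of_iff (fun _ v => col_lt_rowf_iff_forall (v 0) (v 1)) <|
    (prefixDefinable_col_lt_col.app _ _).and <| .all <|
      (prefixDefinable_col_eq_col.app _ _).imp (prefixDefinable_rowf_lt_rowf.app _ _)

lemma prefixDefinable_col_le_rowf : PrefixDefinable₂ fun x y => col x ≤ rowf y :=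
  .of_iff (fun _ v => col_le_iff_forall (v 0) (rowf (v 1))) <| .all <|
    (prefixDefinable_col_lt_col.app _ _).imp (prefixDefinable_col_lt_rowf.app _ _)

lemma prefixDefinable_col_add_one_eq_rowf : PrefixDefinable₂ fun x y => col x + 1 = rowf y :=
  .of_iff (fun _ v => col_add_one_eq_iff_forall (rowf_le_col (v 1)) (v 0)) <|
    (prefixDefinable_col_lt_rowf.app _ _).and <| .all <|
      (prefixDefinable_col_lt_rowf.app _ _).imp (prefixDefinable_col_le_col.app _ _)

lemma prefixDefinable_col_add_one_eq_col : PrefixDefinable₂ fun x y => col x + 1 = col y :=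
  .of_iff (fun _ v => col_add_one_eq_iff_forall (le_refl (col (v 1))) (v 0)) <|
    (prefixDefinable_col_lt_col.app _ _).and <| .all <|
      (prefixDefinable_col_lt_col.app _ _).imp (prefixDefinable_col_le_col.app _ _)

lemma prefixDefinable_testBit_rowf : PrefixDefinable₂ fun x i => (rowf x).testBit (rowf i) :=
  .of_iff (fun _ v => testBit_rowf_iff_exists_Cpred (v 0) (v 1)) <| .ex <|
    (prefixDefinable_col_add_one_eq_rowf.app _ _).and <|
      (prefixDefinable_rowf_eq_rowf.app _ _).and (prefixDefinable_Cpred.app _)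

lemma prefixDefinable_testBit_qseq_col :
    PrefixDefinable₂ fun x i => (qseq (col x)).testBit (rowf i) :=
  .of_iff (fun _ v => testBit_qseq_col_iff_exists_Qpred (v 0) (v 1)) <| .ex <|
    (prefixDefinable_col_add_one_eq_col.app _ _).and <|
      (prefixDefinable_rowf_eq_rowf.app _ _).and (prefixDefinable_Qpred.app _)

lemma prefixDefinable_carryInto :
    PrefixDefinable₂ fun x i => CarryInto (qseq (col x)) (rowf x) (rowf i) :=
  .of_iff (fun _ v => carryInto_rowf_iff_exists (qseq (col (v 0))) (rowf (v 0)) (v 1)) <| .ex <|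
    (prefixDefinable_rowf_lt_rowf.app _ _).and <|
      ((prefixDefinable_testBit_qseq_col.app _ _).and (prefixDefinable_testBit_rowf.app _ _)).and <|
        .all <| (prefixDefinable_rowf_lt_rowf.app _ _).imp <|
          (prefixDefinable_rowf_lt_rowf.app _ _).imp <|
            (prefixDefinable_testBit_qseq_col.app _ _).or (prefixDefinable_testBit_rowf.app _ _)

lemma prefixDefinable_testBit : PrefixDefinable₂ fun x i => x.testBit (rowf i) := by
  have h : PrefixDefinable₂ fun x i => (qseq (col x) + rowf x).testBit (rowf i) :=
    .of_iff (fun _ _ => testBit_add_iff_carryInto _ _ _) <|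
      ((prefixDefinable_testBit_qseq_col.app _ _).iff (prefixDefinable_testBit_rowf.app _ _)).iff
        (prefixDefinable_carryInto.app _ _)
  simpa only [qseq_col_add_rowf] using h

lemma prefixDefinable_rowf_eq : PrefixDefinable₂ fun x y => rowf x = y :=
  .of_iff (fun _ v => rowf_eq_iff_forall_testBit (v 0) (v 1)) <|
    (prefixDefinable_col_le_rowf.app _ _).and <| .all <|
      (prefixDefinable_testBit_rowf.app _ _).iff (prefixDefinable_testBit.app _ _)

/-- Lemma 3.6: there is an FO(<,◁,C,Q)-formula `φr(x,y)`
expressing that `r(x) = y`. -/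
theorem lt_ordc_C_Q_define_r :
    ∃ φr : L4.Formula (Fin 2),
      ∀ n : ℕ,
        letI := struct4 n
        ∀ a b : Fin (n + 1),
          φr.Realize ![a, b] ↔ rowf (a : ℕ) = (b : ℕ) := by
  obtain ⟨φ, hφ⟩ := prefixDefinable_rowf_eq
  exact ⟨φ, fun n a b => hφ n ![a, b]⟩
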